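/- Let m ≥ 3 be odd, set r = (m−1)/2, and let α : Fin r → ℝ satisfy α i > 0 for every i, with d_m, viewed in ℝ[X], equal to ∏_{i} (X − α i)·(X − (α i)⁻¹). Then for every odd n ≥ 3 there exists an integer k > 1 such that ∏_{i} ((α i)^n + (α i)^(−n) − 2) = (k : ℝ)²; that is, for n odd the number G_{m,n} is a perfect square of an integer greater than one. -/

import Mathlib

open Polynomial

/-- The polynomials d_m: d_2 = 1 − X, d_3 = 1 − 3X + X²,
d_{m+1} = (1 − X)·d_m − X·d_{m−1} for m ≥ 3. -/
noncomputable def dpoly : ℕ → Polynomial ℤ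
  | 0 => 0
  | 1 => 0
  | 2 => 1 - X
  | 3 => 1 - 3 * X + X ^ 2
  | (m + 4) => (1 - X) * dpoly (m + 3) - X * dpoly (m + 2)

noncomputable def ePol : ℕ → Polynomial ℤ
  | 0 => 1
  | 1 => X - 3
  | (r + 2) => (X - 4) * ePol (r + 1) - ePol r

noncomputable def sPol : ℕ → Polynomial ℤ
  | 0 => 1
  | 1 => X + 1
  | (r + 2) => X * sPol (r + 1) - sPol r

lemma dpoly_step (m : ℕ) (hm : 4 ≤ m) :
    dpoly m = (1 - X) * dpoly (m - 1) - X * dpoly (m - 2) := by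
  obtain ⟨k, rfl⟩ : ∃ k, m = k + 4 := ⟨m - 4, by omega⟩
  rw [dpoly]; rfl

lemma dpoly_two_step (r : ℕ) :
    dpoly (2 * r + 7) = (1 - 4 * X + X ^ 2) * dpoly (2 * r + 5) - X ^ 2 * dpoly (2 * r + 3) := by
  have h1 := dpoly_step (2 * r + 7) (by omega)
  have h2 := dpoly_step (2 * r + 6) (by omega)
  have h3 := dpoly_step (2 * r + 5) (by omega)
  simp only [show 2 * r + 7 - 1 = 2 * r + 6 by omega, show 2 * r + 7 - 2 = 2 * r + 5 by omega,
    show 2 * r + 6 - 1 = 2 * r + 5 by omega, show 2 * r + 6 - 2 = 2 * r + 4 by omega,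
    show 2 * r + 5 - 1 = 2 * r + 4 by omega, show 2 * r + 5 - 2 = 2 * r + 3 by omega] at h1 h2 h3
  linear_combination h1 + (1 - X) * h2 + X * h3

lemma dpoly_eval (x : ℝ) (hx : x ≠ 0) (r : ℕ) :
    aeval x (dpoly (2 * r + 3)) = x ^ (r + 1) * aeval (x + x⁻¹) (ePol (r + 1)) := by
  induction r using Nat.twoStepInduction with
  | zero =>
    simp [dpoly, ePol, map_ofNat]
    field_simp
    ring
  | one =>
    simp [dpoly, ePol, map_ofNat]
    field_simp
    ring
  | more r h1 h2 =>
    rw [show 2 * (r + 2) + 3 = 2 * r + 7 by ring, dpoly_two_step, ePol]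
    rw [show 2 * (r + 1) + 3 = 2 * r + 5 by ring] at h2
    simp only [map_sub, map_mul, map_add, map_pow, aeval_X, map_one, h1, h2, map_ofNat]
    field_simp
    ring

lemma sPol_eval (x : ℝ) (hx : x ≠ 0) (h : ℕ) :
    x ^ h * (x - 1) * aeval (x + x⁻¹) (sPol h) = x ^ (2 * h + 1) - 1 := by
  induction h using Nat.twoStepInduction with
  | zero => simp [sPol]
  | one =>
    simp [sPol]
    field_simp
    ring
  | more r h1 h2 =>
    rw [sPol]
    simp only [map_sub, map_mul, aeval_X]
    have : x * x⁻¹ = 1 := by field_simp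
    linear_combination (x ^ 2 + 1) * h2 - x ^ 2 * h1 + (x ^ (r + 1) * (x-1) * aeval (x + x⁻¹) (sPol (r+1))) * this

lemma sPol_sq (x : ℝ) (hx : 0 < x) (h : ℕ) :
    x ^ ((2 * h + 1 : ℕ) : ℤ) + x ^ (-((2 * h + 1 : ℕ) : ℤ)) - 2 =
      (x + x⁻¹ - 2) * (aeval (x + x⁻¹) (sPol h)) ^ 2 := by
  have e := sPol_eval x hx.ne' h
  rw [zpow_neg, zpow_natCast]
  have : x ^ (2 * h + 1) + (x ^ (2 * h + 1))⁻¹ - 2 = (x ^ (2 * h + 1) - 1) ^ 2 / x ^ (2 * h + 1) := by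
    field_simp
    ring
  rw [this, ← e, div_eq_iff (by positivity)]
  field_simp
  ring

lemma sPol_gt (y : ℝ) (hy : 2 ≤ y) (h : ℕ) :
    1 ≤ aeval y (sPol h) ∧ aeval y (sPol h) + 1 ≤ aeval y (sPol (h + 1)) := by
  induction h with
  | zero => simp [sPol]; linarith
  | succ h ih =>
    obtain ⟨h1, h2⟩ := ih
    refine ⟨by linarith, ?_⟩
    rw [sPol]
    simp only [map_sub, map_mul, aeval_X]
    nlinarith

lemma ePol_two (r : ℕ) : aeval (2 : ℝ) (ePol r) = (-1) ^ r := by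
  induction r using Nat.twoStepInduction with
  | zero => simp [ePol]
  | one => simp [ePol, map_ofNat]; norm_num
  | more r h1 h2 =>
    rw [ePol]
    simp only [map_sub, map_mul, aeval_X, h1, h2, map_ofNat]
    ring

/-- Let m ≥ 3 be odd, with the roots of d_m given by the positive real pairs
α i, (α i)⁻¹ for i in Fin ((m−1)/2).  Then for every odd n ≥ 3, the number
G_{m,n} = ∏_i ((α i)^n + (α i)^(−n) − 2) is the square of an integer
greater than one. -/
theorem stmt_15 (m : ℕ) (hm : 3 ≤ m) (hmo : Odd m)
    (α : Fin ((m - 1) / 2) → ℝ) (hpos : ∀ i, 0 < α i)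
    (hd : (dpoly m).map (Int.castRingHom ℝ) =
      ∏ i, (X - C (α i)) * (X - C (α i)⁻¹))
    (n : ℕ) (hn : 3 ≤ n) (hno : Odd n) :
    ∃ k : ℤ, 1 < k ∧
      ∏ i, ((α i) ^ (n : ℤ) + (α i) ^ (-(n : ℤ)) - 2) = (k : ℝ) ^ 2 := by
  obtain ⟨r, rfl⟩ : ∃ r, m = 2 * r + 3 := by
    obtain ⟨k, rfl⟩ := hmo
    exact ⟨k - 1, by omega⟩
  obtain ⟨h, rfl⟩ : ∃ h, n = 2 * (h + 1) + 1 := by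
    obtain ⟨k, rfl⟩ := hno
    exact ⟨k - 1, by omega⟩
  have hr : (2 * r + 3 - 1) / 2 = r + 1 := by omega
  generalize (2 * r + 3 - 1) / 2 = s at hr α hpos hd
  subst hr
  have he : (ePol (r + 1)).map (Int.castRingHom ℝ) = ∏ i, (X - C (α i + (α i)⁻¹)) := by
    apply eq_of_infinite_eval_eq
    have hinf : Set.Infinite ((fun x : ℝ => x + x⁻¹) '' Set.Ici 1) := by
      apply (Set.Ici_infinite (1 : ℝ)).image
      intro a ha b hb hab
      simp only [Set.mem_Ici] at ha hb hab
      have ha0 : a ≠ 0 := by positivity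
      have hb0 : b ≠ 0 := by positivity
      have : (a - b) * (a * b - 1) = 0 := by
        field_simp at hab
        linear_combination hab
      rcases mul_eq_zero.1 this with h | h
      · linarith
      · have : a = 1 := by nlinarith
        subst this; linarith
    apply hinf.mono
    rintro _ ⟨x, hx, rfl⟩
    have hx0 : 0 < x := lt_of_lt_of_le one_pos hx
    have h1 := dpoly_eval x hx0.ne' r
    have h2 := congrArg (eval x) hd
    rw [show (Int.castRingHom ℝ) = algebraMap ℤ ℝ from rfl, eval_map_algebraMap, h1] at h2
    simp only [Set.mem_ofPred_eq]
    rw [show (Int.castRingHom ℝ) = algebraMap ℤ ℝ from rfl, eval_map_algebraMap]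
    apply mul_left_cancel₀ (pow_ne_zero (r + 1) hx0.ne')
    rw [h2]
    have : x ^ (r + 1) = ∏ i : Fin (r + 1), x := by simp
    rw [this]
    simp only [eval_prod, ← Finset.prod_mul_distrib]
    refine Finset.prod_congr rfl fun i _ => ?_
    have := (hpos i).ne'
    simp
    field_simp
    ring
  have hy : ∀ i, 2 ≤ α i + (α i)⁻¹ := fun i => by
    have := hpos i
    have h2 : α i + (α i)⁻¹ - 2 = (α i - 1) ^ 2 / α i := by field_simp; ring
    have : 0 ≤ (α i - 1) ^ 2 / α i := by positivity
    linarith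
  have h1 : ∏ i, (α i + (α i)⁻¹ - 2) = 1 := by
    have := congrArg (eval 2) he
    rw [show (Int.castRingHom ℝ) = algebraMap ℤ ℝ from rfl, eval_map_algebraMap, ePol_two] at this
    have e : ∏ i, (α i + (α i)⁻¹ - 2) = ∏ i, ((-1) * (2 - (α i + (α i)⁻¹))) :=
      Finset.prod_congr rfl fun i _ => by ring
    rw [e, Finset.prod_mul_distrib]
    simp [eval_prod] at this
    rw [← this]
    simp [← mul_pow]
  obtain ⟨k, hk⟩ : ∃ k : ℤ, ∏ i, aeval (α i + (α i)⁻¹) (sPol (h + 1)) = (k : ℝ) := by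
    refine ⟨resultant (ePol (r + 1)) (sPol (h + 1)) (r + 1) (sPol (h + 1)).natDegree, ?_⟩
    have := resultant_map_map (ePol (r + 1)) (sPol (h + 1)) (r + 1) (sPol (h + 1)).natDegree
      (Int.castRingHom ℝ)
    have hdeg : (∏ i, (X - C (α i + (α i)⁻¹))).natDegree = r + 1 := by
      rw [natDegree_finsetProd_X_sub_C_eq_card]
      simp
    have hspl : (∏ i, (X - C (α i + (α i)⁻¹))).Splits :=
      Splits.prod fun i _ => Splits.X_sub_C _
    have h3 := resultant_eq_prod_eval _ ((sPol (h + 1)).map (Int.castRingHom ℝ))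
      (sPol (h + 1)).natDegree natDegree_map_le hspl
    rw [he] at this
    have hroots : (∏ i, (X - C (α i + (α i)⁻¹))).roots =
        Finset.univ.val.map (fun i => α i + (α i)⁻¹) := by
      rw [← roots_multiset_prod_X_sub_C (Finset.univ.val.map (fun i => α i + (α i)⁻¹)),
        Multiset.map_map]
      rfl
    rw [hdeg, this, (monic_prod_X_sub_C _ _).leadingCoeff, hroots] at h3
    have h4 : ∀ y : ℝ, eval y ((sPol (h + 1)).map (Int.castRingHom ℝ)) = aeval y (sPol (h + 1)) :=
      fun y => eval_map_algebraMap _ _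
    simp only [one_pow, one_mul, Multiset.map_map, Function.comp_def, h4] at h3
    exact h3.symm
  refine ⟨k, ?_, ?_⟩
  · have : (1 : ℝ) < k := by
      rw [← hk]
      have hg : ∀ i, 1 < aeval (α i + (α i)⁻¹) (sPol (h + 1)) := fun i => by
        have := sPol_gt _ (hy i) h
        linarith
      rw [Fin.prod_univ_succ]
      have : 1 ≤ ∏ i : Fin r, aeval (α i.succ + (α i.succ)⁻¹) (sPol (h + 1)) := by
        have := Finset.prod_le_prod (s := Finset.univ) (f := fun _ : Fin r => (1 : ℝ))
          (g := fun i : Fin r => aeval (α i.succ + (α i.succ)⁻¹) (sPol (h + 1)))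
          (fun _ _ => zero_le_one) (fun i _ => (hg _).le)
        simpa using this
      nlinarith [hg 0]
    exact_mod_cast this
  · rw [← hk, ← Finset.prod_pow]
    simp only [sPol_sq _ (hpos _), Finset.prod_mul_distrib, h1, one_mul]
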